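/- (Amalgamation property for Heyting algebras.) Let A, B, C be Heyting algebras and let f : A → B and g : A → C be injective Heyting algebra homomorphisms. Then there exist a Heyting algebra D and injective Heyting algebra homomorphisms h : B → D and k : C → D such that h ∘ f = k ∘ g. -/

import Mathlib

/-!
The proof goes through prime ideals. Order the prime ideals of a Heyting algebra by inclusion.
A homomorphism `f : A → B` induces a map `f⁻¹` from the primes of `B` to those of `A`, and two
facts follow from the prime ideal theorem for distributive lattices:

* if `f` is injective, then `f⁻¹` is surjective (`exists_prime_over`);
* if `J ⊆ f⁻¹ P` then `J = f⁻¹ P'` for some prime `P' ⊆ P` (`exists_prime_below`), so that `f⁻¹`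
  is a p-morphism (bounded morphism).

Let `Z` be the poset of pairs `(P, Q)` of primes of `B` and `C` with `f⁻¹ P = g⁻¹ Q`. Both
properties are stable under pullback, so the projections of `Z` to the primes of `B` and of `C` are
surjective p-morphisms. A p-morphism `π` from a poset to the primes of `B` yields the Heyting
homomorphism `b ↦ {z | b ∉ π z}` into the lower sets (`PrimeSpec.toLowerSet`), which is injective
if `π` is surjective. The amalgam is therefore the Heyting algebra of lower sets of `Z`.
-/

open Order

/-- The poset of prime ideals of a Heyting algebra, ordered by inclusion. -/
abbrev PrimeSpec (B : Type*) [HeytingAlgebra B] : Type _ := {I : Ideal B // I.IsPrime}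

/-- A form of the prime ideal theorem that asks of `S` and `T` only closure under `⊓` and `⊔`
respectively; the filter and the ideal they generate are then disjoint. -/
theorem PrimeSpec.exists_separating {B : Type*} [HeytingAlgebra B] (S T : Set B)
    (hS : S.Nonempty) (hT : T.Nonempty)
    (hSi : ∀ x ∈ S, ∀ y ∈ S, x ⊓ y ∈ S) (hTs : ∀ x ∈ T, ∀ y ∈ T, x ⊔ y ∈ T)
    (h : ∀ s ∈ S, ∀ t ∈ T, ¬ s ≤ t) :
    ∃ P : PrimeSpec B, (∀ s ∈ S, s ∉ P.1) ∧ ∀ t ∈ T, t ∈ P.1 := by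
  have hF : IsPFilter {b : B | ∃ s ∈ S, s ≤ b} := by
    refine .of_def ?_ ?_ ?_
    · obtain ⟨s, hs⟩ := hS
      exact ⟨s, s, hs, le_rfl⟩
    · rintro x ⟨s, hs, hsx⟩ y ⟨t, ht, hty⟩
      exact ⟨x ⊓ y, ⟨s ⊓ t, hSi s hs t ht, inf_le_inf hsx hty⟩, inf_le_left, inf_le_right⟩
    · rintro x y hxy ⟨s, hs, hsx⟩
      exact ⟨s, hs, hsx.trans hxy⟩
  have hI : IsIdeal {b : B | ∃ t ∈ T, b ≤ t} := by
    refine ⟨?_, ?_, ?_⟩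
    · rintro x y hyx ⟨t, ht, hxt⟩
      exact ⟨t, ht, le_trans hyx hxt⟩
    · obtain ⟨t, ht⟩ := hT
      exact ⟨t, t, ht, le_rfl⟩
    · rintro x ⟨s, hs, hxs⟩ y ⟨t, ht, hyt⟩
      exact ⟨x ⊔ y, ⟨s ⊔ t, hTs s hs t ht, sup_le_sup hxs hyt⟩, le_sup_left, le_sup_right⟩
  have hd : Disjoint (hF.toPFilter : Set B) (hI.toIdeal : Set B) := by
    rw [Set.disjoint_left]
    rintro x ⟨s, hs, hsx⟩ ⟨t, ht, hxt⟩
    exact h s hs t ht (le_trans hsx hxt)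
  obtain ⟨J, hJ, hIJ, hFJ⟩ := DistribLattice.prime_ideal_of_disjoint_filter_ideal hd
  rw [Set.disjoint_left] at hFJ
  exact ⟨⟨J, hJ⟩, fun s hs => hFJ ⟨s, hs, le_rfl⟩, fun t ht => hIJ ⟨t, ht, le_rfl⟩⟩

namespace PrimeSpec

variable {A B C : Type*} [HeytingAlgebra A] [HeytingAlgebra B] [HeytingAlgebra C]

theorem top_notMem (P : PrimeSpec B) : ⊤ ∉ P.1 := P.2.toIsProper.top_notMem

theorem inf_notMem (P : PrimeSpec B) {x y : B} (hx : x ∉ P.1) (hy : y ∉ P.1) : x ⊓ y ∉ P.1 :=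
  fun h => (P.2.mem_or_mem h).elim hx hy

/-- The preimage of a prime ideal under a Heyting homomorphism. -/
def comap (f : HeytingHom A B) (P : PrimeSpec B) : PrimeSpec A :=
  have hI : IsIdeal {a : A | f a ∈ P.1} := by
    refine ⟨fun x y hyx hx => P.1.lower (OrderHomClass.mono f hyx) hx, ⟨⊥, ?_⟩, ?_⟩
    · change f ⊥ ∈ P.1
      rw [map_bot]
      exact P.1.bot_mem
    · intro x hx y hy
      refine ⟨x ⊔ y, ?_, le_sup_left, le_sup_right⟩
      change f (x ⊔ y) ∈ P.1
      rw [map_sup]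
      exact Ideal.sup_mem hx hy
  ⟨hI.toIdeal, by
    have : hI.toIdeal.IsProper := by
      rw [Ideal.isProper_iff_top_notMem]
      change f ⊤ ∉ P.1
      rw [map_top]
      exact P.top_notMem
    refine .of_mem_or_mem ?_
    intro x y hxy
    change f (x ⊓ y) ∈ P.1 at hxy
    rw [map_inf] at hxy
    exact P.2.mem_or_mem hxy⟩

theorem mem_comap {f : HeytingHom A B} {P : PrimeSpec B} {a : A} :
    a ∈ (comap f P).1 ↔ f a ∈ P.1 := Iff.rfl

/-- The common source of `exists_prime_over` (with `S = {⊤}`) and `exists_prime_below` (with `S`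
the complement of a prime): a prime disjoint from `S` and lying over `J` exists as soon as the
filter generated by `S` and `f '' Jᶜ` misses `f '' J`. -/
theorem exists_comap_eq (f : HeytingHom A B) (J : PrimeSpec A) (S : Set B) (hS : ⊤ ∈ S)
    (hSi : ∀ x ∈ S, ∀ y ∈ S, x ⊓ y ∈ S)
    (h : ∀ c ∈ S, ∀ a ∉ J.1, ∀ j ∈ J.1, ¬ c ⊓ f a ≤ f j) :
    ∃ P : PrimeSpec B, (∀ c ∈ S, c ∉ P.1) ∧ comap f P = J := by
  obtain ⟨P, hP, hP'⟩ := exists_separating {b : B | ∃ c ∈ S, ∃ a ∉ J.1, c ⊓ f a = b}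
    {b : B | ∃ j ∈ J.1, f j = b} ⟨_, ⊤, hS, ⊤, J.top_notMem, rfl⟩ ⟨_, ⊥, J.1.bot_mem, rfl⟩
    (by
      rintro _ ⟨c, hc, a, ha, rfl⟩ _ ⟨d, hd, b, hb, rfl⟩
      exact ⟨c ⊓ d, hSi c hc d hd, a ⊓ b, J.inf_notMem ha hb, by
        rw [map_inf, inf_inf_inf_comm]⟩)
    (by
      rintro _ ⟨i, hi, rfl⟩ _ ⟨j, hj, rfl⟩
      exact ⟨i ⊔ j, Ideal.sup_mem hi hj, map_sup f i j⟩)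
    (by
      rintro _ ⟨c, hc, a, ha, rfl⟩ _ ⟨j, hj, rfl⟩
      exact h c hc a ha j hj)
  refine ⟨P, fun c hc hcP => hP _ ⟨c, hc, ⊤, J.top_notMem, rfl⟩ (P.1.lower inf_le_left hcP), ?_⟩
  refine Subtype.ext (SetLike.ext fun a => mem_comap.trans ⟨fun ha => ?_, fun ha => ?_⟩)
  · by_contra haJ
    exact hP _ ⟨⊤, hS, a, haJ, rfl⟩ (P.1.lower inf_le_right ha)
  · exact hP' _ ⟨a, ha, rfl⟩

theorem exists_prime_over (f : HeytingHom A B) (hf : Function.Injective f) (J : PrimeSpec A) :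
    ∃ P : PrimeSpec B, comap f P = J := by
  obtain ⟨P, -, hP⟩ := exists_comap_eq f J {⊤} rfl (by simp) (by
    rintro _ rfl a ha j hj hle
    rw [top_inf_eq, ← inf_eq_left, ← map_inf] at hle
    exact ha (J.1.lower (inf_eq_left.1 (hf hle)) hj))
  exact ⟨P, hP⟩

/-- The p-morphism property of `comap f`; this is where preservation of `⇨` is needed. -/
theorem exists_prime_below (f : HeytingHom A B) (P : PrimeSpec B) (J : PrimeSpec A)
    (hJ : J ≤ comap f P) : ∃ P' ≤ P, comap f P' = J := by
  obtain ⟨P', hP', h⟩ := exists_comap_eq f J {c | c ∉ P.1} P.top_notMem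
    (fun x hx y hy => P.inf_notMem hx hy) (by
      intro c hc a ha j hj hle
      rw [← le_himp_iff, ← map_himp] at hle
      have h1 : a ⇨ j ∉ J.1 := fun h => hc (P.1.lower hle (hJ h))
      exact J.inf_notMem h1 ha (J.1.lower himp_inf_le hj))
  exact ⟨P', fun x hx => by_contra fun hxP => hP' x hxP hx, h⟩

theorem exists_below_of_himp_mem (P : PrimeSpec B) {b c : B} (h : b ⇨ c ∈ P.1) :
    ∃ P' ≤ P, b ∉ P'.1 ∧ c ∈ P'.1 := by
  obtain ⟨P', hP', hc⟩ := exists_separating {x : B | ∃ d ∉ P.1, d ⊓ b = x} {c}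
    ⟨_, ⊤, P.top_notMem, rfl⟩ ⟨c, rfl⟩
    (by
      rintro _ ⟨d, hd, rfl⟩ _ ⟨e, he, rfl⟩
      exact ⟨d ⊓ e, P.inf_notMem hd he, inf_inf_distrib_right d e b⟩)
    (by rintro _ rfl _ rfl; exact sup_idem _)
    (by
      rintro _ ⟨d, hd, rfl⟩ _ rfl hle
      exact hd (P.1.lower (le_himp_iff.2 hle) h))
  refine ⟨P', fun x hx => by_contra fun hxP => ?_, fun hb => ?_, hc c rfl⟩
  · exact hP' _ ⟨x, hxP, rfl⟩ (P'.1.lower inf_le_left hx)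
  · exact hP' _ ⟨⊤, P.top_notMem, rfl⟩ (P'.1.lower inf_le_right hb)

/-- The Heyting homomorphism `b ↦ {z | b ∉ π z}` dual to a p-morphism `π` from a poset `Z` to the
prime ideals of `B`. -/
def toLowerSet {Z : Type*} [Preorder Z] (π : Z → PrimeSpec B) (hπ : Monotone π)
    (hp : ∀ z, ∀ P ≤ π z, ∃ z' ≤ z, π z' = P) : HeytingHom B (LowerSet Z) where
  toFun b := ⟨{z | b ∉ (π z).1}, fun _ _ hle hb h => hb (hπ hle h)⟩
  map_sup' b c := by
    ext z
    change b ⊔ c ∉ (π z).1 ↔ b ∉ (π z).1 ∨ c ∉ (π z).1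
    rw [Ideal.sup_mem_iff, not_and_or]
  map_inf' b c := by
    ext z
    change b ⊓ c ∉ (π z).1 ↔ b ∉ (π z).1 ∧ c ∉ (π z).1
    exact ⟨fun h => ⟨fun hb => h ((π z).1.lower inf_le_left hb),
      fun hc => h ((π z).1.lower inf_le_right hc)⟩, fun h => (π z).inf_notMem h.1 h.2⟩
  map_bot' := by
    ext z
    exact iff_of_false (fun h => h (π z).1.bot_mem) (fun h => h)
  map_himp' b c := by
    apply le_antisymm
    · rw [le_himp_iff]
      rintro z ⟨h1, h2⟩ h3
      exact (π z).inf_notMem h1 h2 ((π z).1.lower himp_inf_le h3)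
    · intro z hz hbc
      obtain ⟨P, hP, hb, hc⟩ := (π z).exists_below_of_himp_mem hbc
      obtain ⟨z', hz', rfl⟩ := hp z P hP
      exact himp_inf_le (a := (⟨{z | b ∉ (π z).1}, fun _ _ hle hb h => hb (hπ hle h)⟩ :
        LowerSet Z)) ⟨LowerSet.lower _ hz' hz, hb⟩ hc

theorem mem_toLowerSet {Z : Type*} [Preorder Z] {π : Z → PrimeSpec B} {hπ : Monotone π}
    {hp : ∀ z, ∀ P ≤ π z, ∃ z' ≤ z, π z' = P} {b : B} {z : Z} :
    z ∈ toLowerSet π hπ hp b ↔ b ∉ (π z).1 := Iff.rfl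

theorem toLowerSet_injective {Z : Type*} [Preorder Z] {π : Z → PrimeSpec B} {hπ : Monotone π}
    {hp : ∀ z, ∀ P ≤ π z, ∃ z' ≤ z, π z' = P} (hs : Function.Surjective π) :
    Function.Injective (toLowerSet π hπ hp) := by
  have key : ∀ b c, toLowerSet π hπ hp b = toLowerSet π hπ hp c → b ≤ c := by
    intro b c h
    by_contra hbc
    obtain ⟨P, hb, hc⟩ := exists_separating {b} {c} ⟨b, rfl⟩ ⟨c, rfl⟩ (by simp) (by simp)
      (by rintro _ rfl _ rfl; exact hbc)
    obtain ⟨z, rfl⟩ := hs P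
    have hz : z ∈ toLowerSet π hπ hp b := mem_toLowerSet.2 (hb b rfl)
    rw [h] at hz
    exact hz (hc c rfl)
  exact fun b c h => le_antisymm (key b c h) (key c b h.symm)

end PrimeSpec

/-- **Amalgamation property for Heyting algebras.** Given injective Heyting
algebra homomorphisms f : A → B and g : A → C, there exist a Heyting algebra D
and injective Heyting algebra homomorphisms h : B → D, k : C → D with
h ∘ f = k ∘ g. -/
theorem heyting_amalgamation {A B C : Type u}
    [HeytingAlgebra A] [HeytingAlgebra B] [HeytingAlgebra C]
    (f : HeytingHom A B) (g : HeytingHom A C)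
    (hf : Function.Injective f) (hg : Function.Injective g) :
    ∃ (D : Type u) (instD : HeytingAlgebra D)
      (h : @HeytingHom B D _ instD) (k : @HeytingHom C D _ instD),
      Function.Injective h ∧ Function.Injective k ∧
        ∀ a : A, h (f a) = k (g a) := by
  let Z : Type u :=
    {p : PrimeSpec B × PrimeSpec C // PrimeSpec.comap f p.1 = PrimeSpec.comap g p.2}
  let π₁ : Z → PrimeSpec B := fun z => z.1.1
  let π₂ : Z → PrimeSpec C := fun z => z.1.2
  have hp₁ : ∀ z, ∀ P ≤ π₁ z, ∃ z' ≤ z, π₁ z' = P := by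
    rintro ⟨⟨P, Q⟩, hPQ⟩ P' hP'
    obtain ⟨Q', hQ', h⟩ := PrimeSpec.exists_prime_below g Q (PrimeSpec.comap f P')
      (hPQ ▸ fun a ha => hP' ha)
    exact ⟨⟨(P', Q'), h.symm⟩, ⟨hP', hQ'⟩, rfl⟩
  have hp₂ : ∀ z, ∀ Q ≤ π₂ z, ∃ z' ≤ z, π₂ z' = Q := by
    rintro ⟨⟨P, Q⟩, hPQ⟩ Q' hQ'
    obtain ⟨P', hP', h⟩ := PrimeSpec.exists_prime_below f P (PrimeSpec.comap g Q')
      (hPQ.symm ▸ fun a ha => hQ' ha)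
    exact ⟨⟨(P', Q'), h⟩, ⟨hP', hQ'⟩, rfl⟩
  have hs₁ : Function.Surjective π₁ := fun P => by
    obtain ⟨Q, hQ⟩ := PrimeSpec.exists_prime_over g hg (PrimeSpec.comap f P)
    exact ⟨⟨(P, Q), hQ.symm⟩, rfl⟩
  have hs₂ : Function.Surjective π₂ := fun Q => by
    obtain ⟨P, hP⟩ := PrimeSpec.exists_prime_over f hf (PrimeSpec.comap g Q)
    exact ⟨⟨(P, Q), hP⟩, rfl⟩
  refine ⟨LowerSet Z, inferInstance,
    PrimeSpec.toLowerSet π₁ (fun _ _ h => h.1) hp₁,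
    PrimeSpec.toLowerSet π₂ (fun _ _ h => h.2) hp₂,
    PrimeSpec.toLowerSet_injective hs₁, PrimeSpec.toLowerSet_injective hs₂, fun a => ?_⟩
  ext z
  change f a ∉ z.1.1.1 ↔ g a ∉ z.1.2.1
  rw [← PrimeSpec.mem_comap, ← PrimeSpec.mem_comap, z.2]
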